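/- arXiv:1705.09383 — 9 statements merged into one kernel-verified Lean document; each statement's English description precedes it below -/
import Mathlib

section
/- Let p ∈ (1, ∞) be a real number, let d ≥ 1, and let yᵢ, yⱼ be two distinct points of ℝ^d equipped with the p-norm. If there exist a real number a and a nonempty open set U ⊆ ℝ^d such that ‖x − yᵢ‖_p − ‖x − yⱼ‖_p = a for every x ∈ U, then |a| = ‖yᵢ − yⱼ‖_p. -/
/-!
Only strict convexity of the `p`-norm is needed. Fix `x ∈ U` and put `A = x - yᵢ`, `B = x - yⱼ`.
Moving `x` a little towards `yⱼ`, to `x - εB`, lowers the distance to `yⱼ` by exactly `ε‖B‖`, so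
it lowers the distance to `yᵢ` by the same amount: `‖A - εB‖ = ‖A‖ - ‖εB‖`. This is equality in
the triangle inequality for `A = (A - εB) + εB`, and strict convexity puts `A` and `B` on a common
ray. Hence `‖yᵢ - yⱼ‖ = ‖A - B‖ = |‖A‖ - ‖B‖| = |a|`. Strict convexity of the norm is derived
coordinatewise from that of `t ↦ |t| ^ p` (`abs_midpoint_rpow_lt`, `strictConvexSpace_piLp`).
-/

lemma abs_midpoint_rpow_lt {p : ℝ} (hp : 1 < p) {s t : ℝ} (h : s ≠ t) :
    |(s + t) / 2| ^ p < (|s| ^ p + |t| ^ p) / 2 := by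
  have hp0 : 0 < p := by linarith
  -- Strict convexity of `u ↦ u ^ p` on `[0, ∞)` separates `s` and `t` unless `|s| = |t|`; then
  -- `s = -t ≠ 0` and the midpoint is `0`.
  by_cases habs : |s| = |t|
  · obtain h' | h' := abs_eq_abs.mp habs
    · exact absurd h' h
    · have ht : 0 < |t| := abs_pos.mpr (by rintro rfl; simp_all)
      have := Real.rpow_pos_of_pos ht p
      simp [h', Real.zero_rpow hp0.ne', this]
  · have hconv := (strictConvexOn_rpow hp).2 (abs_nonneg s) (abs_nonneg t) habs
      (by norm_num : (0 : ℝ) < 1 / 2) (by norm_num : (0 : ℝ) < 1 / 2) (by norm_num)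
    simp only [smul_eq_mul] at hconv
    have hle : |(s + t) / 2| ≤ 1 / 2 * |s| + 1 / 2 * |t| := by
      rw [abs_div, abs_two]
      linarith [abs_add_le s t]
    have := Real.rpow_le_rpow (abs_nonneg _) hle hp0.le
    linarith

lemma abs_midpoint_rpow_le {p : ℝ} (hp : 1 < p) (s t : ℝ) :
    |(s + t) / 2| ^ p ≤ (|s| ^ p + |t| ^ p) / 2 := by
  obtain rfl | h := eq_or_ne s t
  · simp
  · exact (abs_midpoint_rpow_lt hp h).le

lemma strictConvexSpace_piLp {ι : Type*} [Fintype ι] {p : ℝ} (hp : 1 < p)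
    [Fact (1 ≤ ENNReal.ofReal p)] :
    StrictConvexSpace ℝ (PiLp (ENNReal.ofReal p) (fun _ : ι => ℝ)) := by
  have hp0 : 0 < p := by linarith
  have htr : (ENNReal.ofReal p).toReal = p := ENNReal.toReal_ofReal hp0.le
  have hnorm (z : PiLp (ENNReal.ofReal p) (fun _ : ι => ℝ)) : ‖z‖ ^ p = ∑ k, |z k| ^ p := by
    rw [PiLp.norm_eq_sum (by rw [htr]; exact hp0), htr, ← Real.rpow_mul (by positivity),
      one_div_mul_cancel hp0.ne', Real.rpow_one]
    simp
  refine StrictConvexSpace.of_norm_add_ne_two fun x y hx hy hxy hsum => ?_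
  obtain ⟨k, hk⟩ : ∃ k, x k ≠ y k := by
    by_contra! hall
    exact hxy (PiLp.ext hall)
  have hlt : ∑ k, |(x k + y k) / 2| ^ p < ∑ k, (|x k| ^ p + |y k| ^ p) / 2 :=
    Finset.sum_lt_sum (fun k _ => abs_midpoint_rpow_le hp _ _)
      ⟨k, Finset.mem_univ k, abs_midpoint_rpow_lt hp hk⟩
  have hmid : ‖(2⁻¹ : ℝ) • (x + y)‖ ^ p = ∑ k, |(x k + y k) / 2| ^ p := by
    rw [hnorm]
    refine Finset.sum_congr rfl fun k _ => ?_
    rw [PiLp.smul_apply, PiLp.add_apply, smul_eq_mul, div_eq_inv_mul]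
  rw [← hmid, ← Finset.sum_div, Finset.sum_add_distrib, ← hnorm, ← hnorm, norm_smul, hsum, hx, hy]
    at hlt
  norm_num at hlt

/-- The rigidity statement in an arbitrary strictly convex normed space, with no smoothness of the
norm: a single point of `U` and a short move from it towards `z` already force `x - y` and `x - z`
onto a common ray. -/
lemma abs_eq_norm_sub_of_norm_sub_sub_norm_eqOn {E : Type*} [NormedAddCommGroup E]
    [NormedSpace ℝ E] [StrictConvexSpace ℝ E] {y z : E} {a : ℝ} {U : Set E} (hU : IsOpen U)
    (hne : U.Nonempty) (hconst : ∀ x ∈ U, ‖x - y‖ - ‖x - z‖ = a) : |a| = ‖y - z‖ := by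
  obtain ⟨x, hx⟩ := hne
  obtain ⟨ε, hεU, hε0, hε1⟩ : ∃ ε : ℝ, x - ε • (x - z) ∈ U ∧ 0 < ε ∧ ε < 1 := by
    have hcont : ContinuousAt (fun ε : ℝ => x - ε • (x - z)) 0 := by fun_prop
    have hev : ∀ᶠ ε in nhdsWithin (0 : ℝ) (Set.Ioi 0), x - ε • (x - z) ∈ U :=
      (hcont.eventually (hU.mem_nhds (by simpa using hx))).filter_mono nhdsWithin_le_nhds
    exact (hev.and (Ioo_mem_nhdsGT one_pos)).exists
  have h0 := hconst x hx
  have h1 := hconst _ hεU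
  have hz : ‖x - ε • (x - z) - z‖ = (1 - ε) * ‖x - z‖ := by
    rw [show x - ε • (x - z) - z = (1 - ε) • (x - z) by module, norm_smul,
      Real.norm_of_nonneg (by linarith)]
  have hεn : ‖ε • (x - z)‖ = ε * ‖x - z‖ := by rw [norm_smul, Real.norm_of_nonneg hε0.le]
  have hsplit : x - ε • (x - z) - y + ε • (x - z) = x - y := by abel
  have hray : SameRay ℝ (x - ε • (x - z) - y) (ε • (x - z)) := by
    rw [sameRay_iff_norm_add, hsplit, hεn]
    linarith
  have hray' : SameRay ℝ (x - y) (x - z) := by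
    have := hray.add_left (SameRay.refl (ε • (x - z)))
    rw [hsplit] at this
    have hscale := this.pos_smul_right (inv_pos.mpr hε0)
    rwa [inv_smul_smul₀ hε0.ne'] at hscale
  rw [← h0, ← hray'.norm_sub, norm_sub_rev y z]
  congr 1
  abel


/-- **Theorem 3.1.** Let `p ∈ (1, ∞)`, `d ≥ 1`, and let `yᵢ, yⱼ` be distinct points of
`ℝ^d` equipped with the `p`-norm. If the cost difference `x ↦ ‖x − yᵢ‖_p − ‖x − yⱼ‖_p`
is constantly equal to `a` on a nonempty open set, then `|a| = ‖yᵢ − yⱼ‖_p`. -/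
theorem shift_difference_eq_dist_of_locally_constant
    (p : ℝ) (hp : 1 < p) (d : ℕ) (hd : 1 ≤ d)
    (yi yj : PiLp (ENNReal.ofReal p) (fun _ : Fin d => ℝ)) (hy : yi ≠ yj)
    (a : ℝ) (U : Set (PiLp (ENNReal.ofReal p) (fun _ : Fin d => ℝ)))
    (hU : IsOpen U) (hUne : U.Nonempty)
    (hconst : ∀ x ∈ U, ‖x - yi‖ - ‖x - yj‖ = a) :
    |a| = ‖yi - yj‖ := by
  have : Fact (1 ≤ ENNReal.ofReal p) := ⟨by simpa using hp.le⟩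
  have := strictConvexSpace_piLp (ι := Fin d) hp
  exact abs_eq_norm_sub_of_norm_sub_sub_norm_eqOn hU hUne hconst
end

section
/- Let p ∈ (1, ∞) be a real number, let d ≥ 1, and let yᵢ, yⱼ ∈ ℝ^d. Suppose x ∈ ℝ^d satisfies x ≠ yᵢ and x ≠ yⱼ, and suppose the functions z ↦ ‖z − yᵢ‖_p and z ↦ ‖z − yⱼ‖_p have equal Fréchet derivatives at x. Then for every coordinate index k, (x_k − (yᵢ)_k)/‖x − yᵢ‖_p = (x_k − (yⱼ)_k)/‖x − yⱼ‖_p; equivalently, the unit vectors (x − yᵢ)/‖x − yᵢ‖_p and (x − yⱼ)/‖x − yⱼ‖_p coincide. -/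
/-!
For `u = x - y ≠ 0`, the `k`-th partial derivative of `z ↦ ‖z - y‖_p` at `x` is `|w_k|^(p-2) w_k`,
where `w = u / ‖u‖_p` (`fderiv_norm_sub_single`). Since `t ↦ |t|^(p-2) t` is injective for `p > 1`
(`abs_rpow_mul_self_injective`), the derivative determines every coordinate of `w`.
-/

/-- For `p < 2` the value at `t = 0` involves `0 ^ (p - 2)`, which is multiplied by `0`, so that the
map vanishes exactly at `0` for every `p > 1`. -/
theorem abs_rpow_mul_self_injective {p : ℝ} (hp : 1 < p) :
    Function.Injective (fun t : ℝ => |t| ^ (p - 2) * t) := by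
  intro a b h
  have hpos : ∀ {t : ℝ}, t ≠ 0 → 0 < |t| ^ (p - 2) := fun ht =>
    Real.rpow_pos_of_pos (abs_pos.2 ht) _
  have habs : ∀ {t : ℝ}, t ≠ 0 → |(|t| ^ (p - 2) * t)| = |t| ^ (p - 1) := by
    intro t ht
    rw [abs_mul, abs_of_pos (hpos ht), ← Real.rpow_add_one (abs_pos.2 ht).ne']
    ring_nf
  simp only at h
  rcases eq_or_ne a 0 with rfl | ha
  · by_contra hb
    have hb' : b ≠ 0 := fun h0 => hb h0.symm
    rw [mul_zero] at h
    exact mul_ne_zero (hpos hb').ne' hb' h.symm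
  rcases eq_or_ne b 0 with rfl | hb
  · rw [mul_zero] at h
    exact absurd h (mul_ne_zero (hpos ha).ne' ha)
  have h1 : |a| ^ (p - 1) = |b| ^ (p - 1) := by rw [← habs ha, ← habs hb, h]
  have h2 : |a| = |b| :=
    (Real.rpow_left_inj (abs_nonneg a) (abs_nonneg b) (by linarith)).1 h1
  rw [h2] at h
  exact mul_left_cancel₀ (hpos hb).ne' h

/-- The partial derivatives of the distance to `y` in the `p`-norm, away from `y`. -/
theorem fderiv_norm_sub_single (p : ℝ) (hp : 1 < p) [Fact (1 ≤ ENNReal.ofReal p)] {d : ℕ}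
    (x y : PiLp (ENNReal.ofReal p) (fun _ : Fin d => ℝ)) (hxy : x ≠ y) (k : Fin d) :
    fderiv ℝ (fun z => ‖z - y‖) x (PiLp.single (ENNReal.ofReal p) k (1 : ℝ)) =
      |(x k - y k) / ‖x - y‖| ^ (p - 2) * ((x k - y k) / ‖x - y‖) := by
  have hp0 : 0 < p := by linarith
  have htr : (ENNReal.ofReal p).toReal = p := ENNReal.toReal_ofReal hp0.le
  have hnorm : ∀ z : PiLp (ENNReal.ofReal p) (fun _ : Fin d => ℝ),
      ‖z - y‖ = (∑ m, |z m - y m| ^ p) ^ (1 / p) := by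
    intro z
    rw [PiLp.norm_eq_sum (by rw [htr]; exact hp0), htr]
    simp [Real.norm_eq_abs]
  have hN : 0 < ‖x - y‖ := norm_pos_iff.2 (sub_ne_zero.2 hxy)
  have hSnn : 0 ≤ ∑ m, |x m - y m| ^ p :=
    Finset.sum_nonneg fun m _ => Real.rpow_nonneg (abs_nonneg _) _
  have hS : ∑ m, |x m - y m| ^ p = ‖x - y‖ ^ p := by
    rw [hnorm, ← Real.rpow_mul hSnn, one_div_mul_cancel hp0.ne', Real.rpow_one]
  have hcoord : ∀ m : Fin d, HasFDerivAt
      (fun z : PiLp (ENNReal.ofReal p) (fun _ : Fin d => ℝ) => |z m - y m| ^ p)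
      ((p * |x m - y m| ^ (p - 2) * (x m - y m)) •
        (PiLp.proj (𝕜 := ℝ) (ENNReal.ofReal p) (fun _ : Fin d => ℝ) m)) x := by
    intro m
    have h1 : HasFDerivAt
        (fun z : PiLp (ENNReal.ofReal p) (fun _ : Fin d => ℝ) => z m - y m)
        (PiLp.proj (𝕜 := ℝ) (ENNReal.ofReal p) (fun _ : Fin d => ℝ) m) x :=
      (PiLp.proj (𝕜 := ℝ) (ENNReal.ofReal p) (fun _ : Fin d => ℝ) m).hasFDerivAt.sub_const _
    exact (hasDerivAt_abs_rpow (x m - y m) hp).comp_hasFDerivAt x h1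
  have hsum := HasFDerivAt.fun_sum (u := Finset.univ) fun m _ => hcoord m
  have hSne : ∑ m, |x m - y m| ^ p ≠ 0 := by
    rw [hS]; exact (Real.rpow_pos_of_pos hN p).ne'
  have hfd := hsum.rpow_const (p := 1 / p) (Or.inl hSne)
  rw [funext hnorm, hfd.fderiv, hS, ← Real.rpow_mul hN.le]
  have hval : (∑ m, (p * |x m - y m| ^ (p - 2) * (x m - y m)) •
      (PiLp.proj (𝕜 := ℝ) (ENNReal.ofReal p) (fun _ : Fin d => ℝ) m))
        (PiLp.single (ENNReal.ofReal p) k (1 : ℝ)) =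
      p * |x k - y k| ^ (p - 2) * (x k - y k) := by
    simp
  rw [smul_apply, hval, abs_div, abs_of_pos hN,
    Real.div_rpow (abs_nonneg _) hN.le, smul_eq_mul]
  have he : ‖x - y‖ ^ (p * (1 / p - 1)) = (‖x - y‖ ^ (p - 2) * ‖x - y‖)⁻¹ := by
    rw [← Real.rpow_add_one hN.ne', ← Real.rpow_neg hN.le]
    congr 1
    field_simp
    ring
  rw [he]
  have := (Real.rpow_pos_of_pos hN (p - 2)).ne'
  field_simp

/-- **Equation (13) in Theorem 3.1.** Let `p ∈ (1, ∞)`, `d ≥ 1`, and `yᵢ, yⱼ ∈ ℝ^d`.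
If `x ≠ yᵢ`, `x ≠ yⱼ`, and the maps `z ↦ ‖z − yᵢ‖_p` and `z ↦ ‖z − yⱼ‖_p` have equal
Fréchet derivatives at `x`, then for every coordinate `k`,
`(x_k − (yᵢ)_k)/‖x − yᵢ‖_p = (x_k − (yⱼ)_k)/‖x − yⱼ‖_p`; equivalently the normalized
displacement vectors coincide. (The `Fact` instance, automatic from `hp`, provides the
normed-space structure on `PiLp`.) -/
theorem gradient_eq_implies_unit_vectors_eq
    (p : ℝ) (hp : 1 < p) [Fact (1 ≤ ENNReal.ofReal p)] (d : ℕ) (hd : 1 ≤ d)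
    (yi yj x : PiLp (ENNReal.ofReal p) (fun _ : Fin d => ℝ))
    (hxi : x ≠ yi) (hxj : x ≠ yj)
    (hgrad : fderiv ℝ (fun z => ‖z - yi‖) x = fderiv ℝ (fun z => ‖z - yj‖) x) :
    (∀ k : Fin d, (x k - yi k) / ‖x - yi‖ = (x k - yj k) / ‖x - yj‖) ∧
      ‖x - yi‖⁻¹ • (x - yi) = ‖x - yj‖⁻¹ • (x - yj) := by
  have key : ∀ k : Fin d, (x k - yi k) / ‖x - yi‖ = (x k - yj k) / ‖x - yj‖ := by
    intro k
    apply abs_rpow_mul_self_injective hp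
    simp only
    rw [← fderiv_norm_sub_single p hp x yi hxi k, ← fderiv_norm_sub_single p hp x yj hxj k, hgrad]
  refine ⟨key, ?_⟩
  ext k
  simpa [div_eq_inv_mul] using key k
end

section
/- Let p ∈ (1, ∞) be a real number, let d ≥ 1, let y ∈ ℝ^d, and let x ∈ ℝ^d with x ≠ y. For each coordinate index k with x_k ≠ y_k, the function t ↦ ‖(x + t·e_k) − y‖_p (where e_k is the k-th standard basis vector) is twice differentiable at t = 0, and its second derivative at 0 equals (p−1) · |x_k − y_k|^{p−2} · (‖x − y‖_p^p − |x_k − y_k|^p) / ‖x − y‖_p^{2p−1}. -/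
/-!
Varying only the `k`-th coordinate, the norm is `t ↦ (C + |a + t| ^ p) ^ (1 / p)`, where
`a = x k - y k` and `C ≥ 0` collects the contribution of the other coordinates
(`norm_add_smul_single_sub`). Since `a ≠ 0`, near `t = 0` we have `|a + t| = |a| + σ t` with
`σ = sign a`, so this is locally a composition of powers of positive quantities and can be
differentiated twice by the chain rule. The two terms of the second derivative
combine through `σ ^ 2 = 1` and `S = C + |a| ^ p = ‖x - y‖ ^ p` to
`(p - 1) |a| ^ (p - 2) S ^ (1 / p - 2) (S - |a| ^ p)`.
-/

/-- First derivative of the one-variable profile along the positive branch of the absolute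
value. -/
lemma hasDerivAt_profile {p C b σ t : ℝ} (hp : 1 < p) (hC : 0 ≤ C) (hu : 0 < b + σ * t) :
    HasDerivAt (fun t : ℝ => (C + (b + σ * t) ^ p) ^ (1 / p))
      (σ * ((C + (b + σ * t) ^ p) ^ (1 / p - 1) * (b + σ * t) ^ (p - 1))) t := by
  have h1 : HasDerivAt (fun t : ℝ => b + σ * t) σ t := by
    simpa using ((hasDerivAt_id t).const_mul σ).const_add b
  have hS : 0 < C + (b + σ * t) ^ p := by positivity
  have h2 := (((h1.rpow_const (p := p) (Or.inl hu.ne')).const_add C).rpow_const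
    (p := 1 / p) (Or.inl hS.ne'))
  refine h2.congr_deriv ?_
  field_simp

/-- Derivative at `0` of the formula in `hasDerivAt_profile`. -/
lemma hasDerivAt_profile_deriv {p C b σ : ℝ} (hp : 1 < p) (hC : 0 ≤ C) (hb : 0 < b)
    (hσ : σ * σ = 1) :
    HasDerivAt (fun t : ℝ => σ * ((C + (b + σ * t) ^ p) ^ (1 / p - 1) * (b + σ * t) ^ (p - 1)))
      ((p - 1) * b ^ (p - 2) * C * (C + b ^ p) ^ (1 / p - 2)) 0 := by
  have h1 : HasDerivAt (fun t : ℝ => b + σ * t) σ 0 := by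
    simpa using ((hasDerivAt_id (0 : ℝ)).const_mul σ).const_add b
  have hu : b + σ * 0 ≠ 0 := by simpa using hb.ne'
  have hS : 0 < C + b ^ p := by positivity
  have hS' : C + (b + σ * 0) ^ p ≠ 0 := by simpa using hS.ne'
  have h2 := ((((h1.rpow_const (p := p) (Or.inl hu)).const_add C).rpow_const
    (p := 1 / p - 1) (Or.inl hS')).mul (h1.rpow_const (p := p - 1) (Or.inl hu))).const_mul σ
  refine h2.congr_deriv ?_
  simp only [mul_zero, add_zero]
  have e1 : (C + b ^ p) ^ (1 / p - 1) = (C + b ^ p) ^ (1 / p - 2) * (C + b ^ p) := by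
    rw [← Real.rpow_add_one hS.ne']; ring_nf
  have e2 : b ^ (p - 1) = b ^ (p - 2) * b := by
    rw [← Real.rpow_add_one hb.ne']; ring_nf
  have e3 : b ^ p = b ^ (p - 2) * b * b := by
    rw [← Real.rpow_add_one hb.ne', ← Real.rpow_add_one hb.ne']; ring_nf
  rw [show (1 / p - 1 - 1 : ℝ) = 1 / p - 2 by ring, show (p - 1 - 1 : ℝ) = p - 2 by ring, e1, e2]
  have hp0 : p ≠ 0 := by positivity
  have hpp : p * (1 / p - 1) = 1 - p := by field_simp
  generalize (C + b ^ p) ^ (1 / p - 2) = T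
  rw [e3]
  generalize b ^ (p - 2) = B
  linear_combination (B * T * (p - 1) * C) * hσ + σ * σ * T * B * b * B * b * hpp

/-- Along the `k`-th coordinate direction the `p`-norm only sees the `k`-th term of its
defining sum change. -/
lemma norm_add_smul_single_sub {p : ℝ} (hp : 1 < p) {d : ℕ}
    (y x : PiLp (ENNReal.ofReal p) (fun _ : Fin d => ℝ)) (k : Fin d) (t : ℝ) :
    ‖(x + t • (WithLp.equiv (ENNReal.ofReal p) (Fin d → ℝ)).symm (Pi.single k 1)) - y‖
      = ((∑ i ∈ Finset.univ.erase k, |x i - y i| ^ p) + |x k - y k + t| ^ p) ^ (1 / p) := by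
  have hpr : (ENNReal.ofReal p).toReal = p := ENNReal.toReal_ofReal (by linarith)
  rw [PiLp.norm_eq_sum (by rw [hpr]; linarith), hpr,
    ← Finset.sum_erase_add _ _ (Finset.mem_univ k)]
  congr 2
  · refine Finset.sum_congr rfl fun i hi => ?_
    simp [Finset.ne_of_mem_erase hi]
  · simp [add_sub_right_comm]

/-- **Second-order partial derivative of the `p`-norm cost** (used in the `K > 1` case
of Theorem 3.1). Let `p ∈ (1, ∞)`, `d ≥ 1`, `y ∈ ℝ^d`, and `x ≠ y`, and let `k` be a
coordinate with `x_k ≠ y_k`. Then `f : t ↦ ‖(x + t·e_k) − y‖_p` is twice differentiable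
at `0`, with second derivative
`(p−1) · |x_k − y_k|^(p−2) · (‖x − y‖_p^p − |x_k − y_k|^p) / ‖x − y‖_p^(2p−1)`. -/
theorem second_deriv_pnorm_coordinate
    (p : ℝ) (hp : 1 < p) (d : ℕ) (hd : 1 ≤ d)
    (y x : PiLp (ENNReal.ofReal p) (fun _ : Fin d => ℝ)) (hxy : x ≠ y)
    (k : Fin d) (hk : x k ≠ y k)
    (f : ℝ → ℝ)
    (hf : f = fun t : ℝ =>
      ‖(x + t • (WithLp.equiv (ENNReal.ofReal p) (Fin d → ℝ)).symm (Pi.single k 1)) - y‖) :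
    DifferentiableAt ℝ f 0 ∧
      HasDerivAt (deriv f)
        ((p - 1) * |x k - y k| ^ (p - 2) * (‖x - y‖ ^ p - |x k - y k| ^ p)
          / ‖x - y‖ ^ (2 * p - 1)) 0 := by
  have hN := norm_add_smul_single_sub hp y x k 0
  simp only [zero_smul, add_zero] at hN
  simp only [norm_add_smul_single_sub hp y x k] at hf
  have hC : 0 ≤ ∑ i ∈ Finset.univ.erase k, |x i - y i| ^ p :=
    Finset.sum_nonneg fun i _ => by positivity
  generalize (∑ i ∈ Finset.univ.erase k, |x i - y i| ^ p) = C at *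
  have ha : x k - y k ≠ 0 := sub_ne_zero.mpr hk
  generalize x k - y k = a at *
  have hb : 0 < |a| := abs_pos.mpr ha
  obtain ⟨σ, hσ, hσa⟩ : ∃ σ : ℝ, σ * σ = 1 ∧ σ * a = |a| := by
    rcases abs_cases a with h | h
    · exact ⟨1, by norm_num, by linarith⟩
    · exact ⟨-1, by norm_num, by linarith⟩
  have hpos : ∀ᶠ t in nhds (0 : ℝ), 0 < |a| + σ * t :=
    ContinuousAt.eventually_lt (by fun_prop) (by fun_prop) (by simpa using hb)
  have hfg : f =ᶠ[nhds 0] fun t => (C + (|a| + σ * t) ^ p) ^ (1 / p) := by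
    filter_upwards [hpos] with t ht
    have habs : |a + t| = |a| + σ * t := by
      have h1 : |σ| = 1 := by
        rcases mul_self_eq_one_iff.mp hσ with h | h <;> simp [h]
      rw [← abs_of_pos ht, ← hσa, ← mul_add, abs_mul, h1, one_mul]
    rw [hf, ← habs]
  have hS : 0 < C + |a| ^ p := by positivity
  have hp0 : p ≠ 0 := by positivity
  refine ⟨((hasDerivAt_profile hp hC (by simpa using hb)).congr_of_eventuallyEq
    hfg).differentiableAt, ?_⟩
  have hdf : deriv f =ᶠ[nhds 0] fun t =>
      σ * ((C + (|a| + σ * t) ^ p) ^ (1 / p - 1) * (|a| + σ * t) ^ (p - 1)) := by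
    filter_upwards [hfg.eventuallyEq_nhds, hpos] with t h1 h2
    exact ((hasDerivAt_profile hp hC h2).congr_of_eventuallyEq h1).deriv
  refine ((hasDerivAt_profile_deriv hp hC hb hσ).congr_of_eventuallyEq hdf).congr_deriv ?_
  have e1 : ‖x - y‖ ^ p = C + |a| ^ p := by
    rw [hN, ← Real.rpow_mul hS.le, one_div_mul_cancel hp0, Real.rpow_one]
  have e2 : ‖x - y‖ ^ (2 * p - 1) = ((C + |a| ^ p) ^ (1 / p - 2))⁻¹ := by
    rw [hN, ← Real.rpow_mul hS.le, ← Real.rpow_neg hS.le]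
    congr 1
    field_simp
    ring
  rw [e1, e2, div_inv_eq_mul, add_sub_cancel_right]
end

section
/- Let p ∈ (1, ∞) be a real number, let d ≥ 2, and let yᵢ, yⱼ ∈ ℝ^d. Suppose x ∈ ℝ^d satisfies x_k ≠ (yᵢ)_k and x_k ≠ (yⱼ)_k for every coordinate index k, and suppose that for every k the functions t ↦ ‖(x + t·e_k) − yᵢ‖_p and t ↦ ‖(x + t·e_k) − yⱼ‖_p have equal first derivatives and equal second derivatives at t = 0. Then yᵢ = yⱼ. -/
/-!
Everything happens one coordinate at a time. Along `e_k` the cost is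
`t ↦ (C + |u + t| ^ p) ^ (1 / p)`, where `u = x_k - y_k` and `C` collects the other coordinates;
`C > 0` because `d ≥ 2` and no coordinate of `x - y` vanishes. With `S = C + |u| ^ p` the
derivatives at `0` are
`f' = sign u * S ^ (1 / p - 1) * |u| ^ (p - 1)` and
`f'' = (p - 1) * S ^ (1 / p - 2) * |u| ^ (p - 2) * C`.
So `f'` determines the sign of `u` and the ratio `|u| ^ p / S = |f'| ^ (p / (p - 1))`, hence also
`C / S = 1 - |u| ^ p / S`. Since `f'' * |u| = (p - 1) * |f'| * (C / S)` with `f'' ≠ 0`, the two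
derivatives determine `|u|`, and therefore `u` (`eq_of_derivs_eq`).
-/

/-- The `p`-norm cost along one coordinate axis: `u` is the signed gap in that coordinate and `C`
is the sum of the `p`-th powers of the gaps in all other coordinates. -/
noncomputable def axisCost (p C u t : ℝ) : ℝ := (C + |u + t| ^ p) ^ (1 / p)

/-- Near a parameter where `s * (u + t) > 0` with `s = ±1`, the absolute value is the smooth
function `s * (u + t)`, so the cost is differentiable. -/
lemma hasDerivAt_axisCost {p C u s t : ℝ} (hp : 1 < p) (hC : 0 < C) (hs : s = 1 ∨ s = -1)
    (ht : 0 < s * (u + t)) :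
    HasDerivAt (axisCost p C u)
      (s * ((C + (s * (u + t)) ^ p) ^ (1 / p - 1) * (s * (u + t)) ^ (p - 1))) t := by
  have hw : HasDerivAt (fun t => s * (u + t)) s t := by
    simpa using ((hasDerivAt_id t).const_add u).const_mul s
  have hS : 0 < C + (s * (u + t)) ^ p := by positivity
  have h := ((hw.rpow_const (p := p) (Or.inl ht.ne')).const_add C).rpow_const
    (p := 1 / p) (Or.inl hS.ne')
  have habs : axisCost p C u =ᶠ[nhds t] fun t => (C + (s * (u + t)) ^ p) ^ (1 / p) := by
    filter_upwards [hw.continuousAt.eventually (lt_mem_nhds ht)] with r hr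
    have : |u + r| = s * (u + r) := by
      rw [← abs_of_pos hr, abs_mul]
      rcases hs with rfl | rfl <;> simp
    rw [axisCost, this]
  refine (h.congr_of_eventuallyEq habs).congr_deriv ?_
  field_simp

/-- The second derivative is stated multiplied by `|u| = s * u`, so that, apart from this factor,
only quantities determined by the first derivative appear on the right. -/
lemma derivs_axisCost {p C u s : ℝ} (hp : 1 < p) (hC : 0 < C) (hs : s = 1 ∨ s = -1)
    (hu : 0 < s * u) :
    deriv (axisCost p C u) 0 = s * ((C + (s * u) ^ p) ^ (1 / p - 1) * (s * u) ^ (p - 1)) ∧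
    deriv (deriv (axisCost p C u)) 0 * (s * u) =
      (p - 1) * ((C + (s * u) ^ p) ^ (1 / p - 1) * (s * u) ^ (p - 1)) *
        (1 - (s * u) ^ p / (C + (s * u) ^ p)) := by
  have hu0 : 0 < s * (u + 0) := by simpa using hu
  refine ⟨by simpa using (hasDerivAt_axisCost hp hC hs hu0).deriv, ?_⟩
  have hw : HasDerivAt (fun t => s * (u + t)) s 0 := by
    simpa using ((hasDerivAt_id (0 : ℝ)).const_add u).const_mul s
  have hS : 0 < C + (s * (u + 0)) ^ p := by positivity
  have hd : deriv (axisCost p C u) =ᶠ[nhds 0] fun t =>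
      s * ((C + (s * (u + t)) ^ p) ^ (1 / p - 1) * (s * (u + t)) ^ (p - 1)) := by
    filter_upwards [hw.continuousAt.eventually (lt_mem_nhds hu0)] with r hr
    exact (hasDerivAt_axisCost hp hC hs hr).deriv
  have h := ((((hw.rpow_const (p := p) (Or.inl hu0.ne')).const_add C).rpow_const
    (p := 1 / p - 1) (Or.inl hS.ne')).mul
      (hw.rpow_const (p := p - 1) (Or.inl hu0.ne'))).const_mul s
  have h' := (h.congr_of_eventuallyEq hd).deriv
  rw [h']
  simp only [add_zero] at hS ⊢
  have hss : s * s = 1 := by rcases hs with rfl | rfl <;> norm_num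
  generalize s * u = w at *
  -- All powers are reduced to `w ^ p` and `S ^ (1 / p - 1)`.
  rw [Real.rpow_sub_one hu.ne' (p - 1), Real.rpow_sub_one hS.ne' (1 / p - 1),
    Real.rpow_sub_one hu.ne' p]
  generalize hW : w ^ p = W at *
  generalize (C + W) ^ (1 / p - 1) = A at *
  have hs2 : s ^ 2 = 1 := by rw [sq, hss]
  field_simp
  rw [hs2]
  ring

/-- The first derivative recovers the share `w ^ p / S` of one coordinate in the total. -/
lemma rpow_firstDeriv {p S w : ℝ} (hp : 1 < p) (hS : 0 < S) (hw : 0 < w) :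
    (S ^ (1 / p - 1) * w ^ (p - 1)) ^ (p / (p - 1)) = w ^ p / S := by
  have h1 : p - 1 ≠ 0 := by linarith
  have h0 : p ≠ 0 := by linarith
  rw [Real.mul_rpow (by positivity) (by positivity), ← Real.rpow_mul hS.le,
    ← Real.rpow_mul hw.le]
  have e1 : (1 / p - 1) * (p / (p - 1)) = -1 := by field_simp; ring
  have e2 : (p - 1) * (p / (p - 1)) = p := by field_simp
  rw [e1, e2, Real.rpow_neg_one]
  ring

lemma exists_sign {u : ℝ} (hu : u ≠ 0) : ∃ s : ℝ, (s = 1 ∨ s = -1) ∧ 0 < s * u := by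
  rcases hu.lt_or_gt with h | h
  · exact ⟨-1, Or.inr rfl, by linarith⟩
  · exact ⟨1, Or.inl rfl, by linarith⟩

/-- The first and second derivatives of the cost along an axis determine the signed gap `u`,
whatever the contributions `C`, `D` of the other coordinates. -/
lemma eq_of_derivs_eq {p C D u v : ℝ} (hp : 1 < p) (hC : 0 < C) (hD : 0 < D) (hu : u ≠ 0)
    (hv : v ≠ 0) (h1 : deriv (axisCost p C u) 0 = deriv (axisCost p D v) 0)
    (h2 : deriv (deriv (axisCost p C u)) 0 = deriv (deriv (axisCost p D v)) 0) : u = v := by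
  obtain ⟨s, hs, hsu⟩ := exists_sign hu
  obtain ⟨r, hr, hrv⟩ := exists_sign hv
  obtain ⟨a1, a2⟩ := derivs_axisCost hp hC hs hsu
  obtain ⟨b1, b2⟩ := derivs_axisCost hp hD hr hrv
  rw [a1, b1] at h1
  rw [h2] at a2
  have hS : 0 < C + (s * u) ^ p := by positivity
  have hT : 0 < D + (r * v) ^ p := by positivity
  have hq := rpow_firstDeriv hp hS hsu
  have hq' := rpow_firstDeriv hp hT hrv
  have hlt : (s * u) ^ p / (C + (s * u) ^ p) < 1 := by
    rw [div_lt_one hS]; linarith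
  have hApos : 0 < (C + (s * u) ^ p) ^ (1 / p - 1) * (s * u) ^ (p - 1) := by positivity
  have hBpos : 0 < (D + (r * v) ^ p) ^ (1 / p - 1) * (r * v) ^ (p - 1) := by positivity
  generalize (C + (s * u) ^ p) ^ (1 / p - 1) * (s * u) ^ (p - 1) = A at *
  generalize (D + (r * v) ^ p) ^ (1 / p - 1) * (r * v) ^ (p - 1) = B at *
  have hsr : s = r := by
    rcases hs with rfl | rfl <;> rcases hr with rfl | rfl <;> first | rfl | (exfalso; linarith)
  subst hsr
  have hs0 : s ≠ 0 := by rintro rfl; simp at hsu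
  have hAB : A = B := mul_left_cancel₀ hs0 h1
  subst hAB
  rw [← hq', hq] at b2
  have hne : deriv (deriv (axisCost p D v)) 0 ≠ 0 := by
    intro h0
    rw [h0, zero_mul] at a2
    have : 0 < (p - 1) * A * (1 - (s * u) ^ p / (C + (s * u) ^ p)) :=
      mul_pos (mul_pos (by linarith) hApos) (by linarith)
    linarith
  exact mul_left_cancel₀ hs0 (mul_left_cancel₀ hne (a2.trans b2.symm))

lemma norm_line_eq_axisCost {p : ℝ} (hp : 1 < p) {d : ℕ}
    (x y : PiLp (ENNReal.ofReal p) (fun _ : Fin d => ℝ)) (k : Fin d) :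
    (fun t : ℝ =>
      ‖(x + t • (WithLp.equiv (ENNReal.ofReal p) (Fin d → ℝ)).symm (Pi.single k 1)) - y‖) =
    axisCost p (∑ j ∈ Finset.univ.erase k, |x j - y j| ^ p) (x k - y k) := by
  have hpr : (ENNReal.ofReal p).toReal = p := ENNReal.toReal_ofReal (by linarith)
  funext t
  rw [PiLp.norm_eq_sum (by rw [hpr]; linarith), hpr, axisCost,
    ← Finset.sum_erase_add _ _ (Finset.mem_univ k)]
  congr 2
  · refine Finset.sum_congr rfl fun j hj => ?_
    simp [Finset.ne_of_mem_erase hj]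
  · simp [add_sub_right_comm]

lemma sum_erase_pos {p : ℝ} {d : ℕ} (hd : 2 ≤ d)
    (x y : PiLp (ENNReal.ofReal p) (fun _ : Fin d => ℝ)) (h : ∀ k, x k ≠ y k) (k : Fin d) :
    0 < ∑ j ∈ Finset.univ.erase k, |x j - y j| ^ p := by
  refine Finset.sum_pos
    (fun j _ => Real.rpow_pos_of_pos (abs_pos.mpr (sub_ne_zero.mpr (h j))) p) ?_
  rw [← Finset.card_pos, Finset.card_erase_of_mem (Finset.mem_univ k), Finset.card_univ,
    Fintype.card_fin]
  omega


/-- **Core of the `K > 1` case in Theorem 3.1.** Let `p ∈ (1, ∞)`, `d ≥ 2`, and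
`yᵢ, yⱼ ∈ ℝ^d`. Suppose every coordinate of `x` differs from the corresponding
coordinates of both `yᵢ` and `yⱼ`, and that for every coordinate `k` the functions
`t ↦ ‖(x + t·e_k) − yᵢ‖_p` and `t ↦ ‖(x + t·e_k) − yⱼ‖_p` have equal first and equal
second derivatives at `t = 0`. Then `yᵢ = yⱼ`. -/
theorem targets_eq_of_matching_first_and_second_derivs
    (p : ℝ) (hp : 1 < p) (d : ℕ) (hd : 2 ≤ d)
    (yi yj x : PiLp (ENNReal.ofReal p) (fun _ : Fin d => ℝ))
    (hxi : ∀ k : Fin d, x k ≠ yi k) (hxj : ∀ k : Fin d, x k ≠ yj k)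
    (fi fj : Fin d → ℝ → ℝ)
    (hfi : ∀ k, fi k = fun t : ℝ =>
      ‖(x + t • (WithLp.equiv (ENNReal.ofReal p) (Fin d → ℝ)).symm (Pi.single k 1)) - yi‖)
    (hfj : ∀ k, fj k = fun t : ℝ =>
      ‖(x + t • (WithLp.equiv (ENNReal.ofReal p) (Fin d → ℝ)).symm (Pi.single k 1)) - yj‖)
    (hfirst : ∀ k, deriv (fi k) 0 = deriv (fj k) 0)
    (hsecond : ∀ k, deriv (deriv (fi k)) 0 = deriv (deriv (fj k)) 0) :
    yi = yj := by
  ext k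
  have h1 := hfirst k
  have h2 := hsecond k
  rw [hfi, hfj, norm_line_eq_axisCost hp, norm_line_eq_axisCost hp] at h1 h2
  have := eq_of_derivs_eq hp (sum_erase_pos hd x yi hxi k) (sum_erase_pos hd x yj hxj k)
    (sub_ne_zero.mpr (hxi k)) (sub_ne_zero.mpr (hxj k)) h1 h2
  linarith
end

section
/- Let p ∈ (1, ∞) be a real number, let d ≥ 1, and let yᵢ, yⱼ be two distinct points of ℝ^d equipped with the p-norm. For every k ∈ ℝ with |k| ≠ ‖yᵢ − yⱼ‖_p, the level set {x ∈ ℝ^d : ‖x − yᵢ‖_p − ‖x − yⱼ‖_p = k} has empty interior. -/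
/-!
If `f x = ‖x - a‖ - ‖x - b‖` is constant near `x`, then moving from `x` in the direction
`u = x - a` increases `‖x - a‖` at rate exactly `‖u‖`, so `‖x - b‖` must grow at that rate too.
With `v = x - b` this reads `‖v + t • u‖ = ‖v‖ + ‖t • u‖` for small `t > 0`: equality in the
triangle inequality. In a strictly convex space (`interior_level_set_eq_empty`) this forces `u` and
`v` onto the same ray, whence `|‖u‖ - ‖v‖| = ‖u - v‖ = ‖a - b‖`.

The `p`-norm is strictly convex for `1 < p < ∞` (`strictConvexSpace_piLp`) because `t ↦ |t| ^ p`
is strictly midpoint convex on `ℝ` (`abs_half_add_rpow_lt`), and summing over coordinates keeps the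
inequality strict as soon as one coordinate differs.
-/

lemma abs_half_add_rpow_lt {p : ℝ} (hp : 1 < p) {a b : ℝ} (hab : a ≠ b) :
    |(1 / 2) * a + (1 / 2) * b| ^ p < (1 / 2) * |a| ^ p + (1 / 2) * |b| ^ p := by
  have hp0 : 0 < p := by linarith
  by_cases h : |a| = |b|
  · -- Here `b = -a ≠ 0`, so the left-hand side vanishes and the right-hand side does not.
    have h1 : a = -b := (abs_eq_abs.mp h).resolve_left hab
    have hb : b ≠ 0 := by
      rintro rfl
      simp at h1
      exact hab h1
    have h2 : (1 / 2) * a + (1 / 2) * b = 0 := by rw [h1]; ring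
    rw [h2, abs_zero, Real.zero_rpow hp0.ne', h]
    have : 0 < |b| ^ p := Real.rpow_pos_of_pos (abs_pos.mpr hb) p
    linarith
  · have h1 := (strictConvexOn_rpow hp).2 (abs_nonneg a : |a| ∈ Set.Ici (0 : ℝ))
      (abs_nonneg b : |b| ∈ Set.Ici (0 : ℝ)) h (one_half_pos (α := ℝ)) one_half_pos (add_halves 1)
    simp only [smul_eq_mul] at h1
    refine lt_of_le_of_lt (Real.rpow_le_rpow (abs_nonneg _) ?_ hp0.le) h1
    refine (abs_add_le _ _).trans (le_of_eq ?_)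
    rw [abs_mul, abs_mul, abs_of_pos (one_half_pos (α := ℝ))]

lemma abs_half_add_rpow_le {p : ℝ} (hp : 1 < p) (a b : ℝ) :
    |(1 / 2) * a + (1 / 2) * b| ^ p ≤ (1 / 2) * |a| ^ p + (1 / 2) * |b| ^ p := by
  rcases eq_or_ne a b with rfl | h
  · rw [← add_mul, add_halves, one_mul, ← add_mul, add_halves, one_mul]
  · exact (abs_half_add_rpow_lt hp h).le

lemma interior_level_set_eq_empty {E : Type*} [NormedAddCommGroup E] [NormedSpace ℝ E]
    [StrictConvexSpace ℝ E] (a b : E) (k : ℝ) (hk : |k| ≠ ‖a - b‖) :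
    interior {x : E | ‖x - a‖ - ‖x - b‖ = k} = ∅ := by
  rw [Set.eq_empty_iff_forall_notMem]
  intro x hx
  have hxk : x ∈ {x : E | ‖x - a‖ - ‖x - b‖ = k} := interior_subset hx
  rw [Set.mem_ofPred_eq] at hxk
  have hc : Filter.Tendsto (fun t : ℝ => x + t • (x - a)) (nhdsWithin 0 (Set.Ioi 0)) (nhds x) := by
    have : Continuous fun t : ℝ => x + t • (x - a) := by fun_prop
    simpa using (this.tendsto 0).mono_left nhdsWithin_le_nhds
  obtain ⟨t, ht, ht0⟩ := ((hc.eventually (mem_interior_iff_mem_nhds.mp hx)).and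
    self_mem_nhdsWithin).exists
  have ht0 : 0 < t := ht0
  have ht : ‖x + t • (x - a) - a‖ - ‖x + t • (x - a) - b‖ = k := ht
  have e1 : x + t • (x - a) - a = (1 + t) • (x - a) := by module
  have e2 : x + t • (x - a) - b = (x - b) + t • (x - a) := by abel
  rw [e1, e2, norm_smul, Real.norm_of_nonneg (by linarith : 0 ≤ 1 + t)] at ht
  have hray : SameRay ℝ (x - b) (t • (x - a)) := by
    rw [sameRay_iff_norm_add, norm_smul, Real.norm_of_nonneg ht0.le]
    linarith
  have hray' : SameRay ℝ (x - b) (x - a) := by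
    have := hray.pos_smul_right (inv_pos.mpr ht0)
    rwa [inv_smul_smul₀ ht0.ne'] at this
  have hn := hray'.norm_sub
  rw [sub_sub_sub_cancel_left, abs_sub_comm, hxk] at hn
  exact hk hn.symm

/-- **Restatement of Theorem 3.1.** Let `p ∈ (1, ∞)`, `d ≥ 1`, and let `yᵢ ≠ yⱼ` in
`ℝ^d` with the `p`-norm. For every `k ∈ ℝ` with `|k| ≠ ‖yᵢ − yⱼ‖_p`, the level set
`{x : ‖x − yᵢ‖_p − ‖x − yⱼ‖_p = k}` has empty interior. -/
theorem level_set_empty_interior_of_abs_ne_dist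
    (p : ℝ) (hp : 1 < p) (d : ℕ) (hd : 1 ≤ d)
    (yi yj : PiLp (ENNReal.ofReal p) (fun _ : Fin d => ℝ)) (hy : yi ≠ yj)
    (k : ℝ) (hk : |k| ≠ ‖yi - yj‖) :
    interior {x : PiLp (ENNReal.ofReal p) (fun _ : Fin d => ℝ) |
      ‖x - yi‖ - ‖x - yj‖ = k} = ∅ := by
  have : Fact (1 ≤ ENNReal.ofReal p) := ⟨ENNReal.one_le_ofReal.mpr hp.le⟩
  have : StrictConvexSpace ℝ (PiLp (ENNReal.ofReal p) (fun _ : Fin d => ℝ)) :=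
    strictConvexSpace_piLp hp
  exact interior_level_set_eq_empty yi yj k hk
end

section
/- Equip ℝ² with the ∞-norm ‖x‖_∞ = max(|x₁|, |x₂|), let y₁ = (1/4, 1/2) and y₂ = (3/4, 1/2), and let g(x) = ‖x − y₂‖_∞ − ‖x − y₁‖_∞. Then the two-dimensional Lebesgue measure of {x ∈ [0,1]² : g(x) = 1/2} equals 1/16, and the Lebesgue measure of {x ∈ [0,1]² : g(x) = −1/2} equals 1/16. -/
open MeasureTheory

/-!
The equality `g x = 1/2` is the equality case of the triangle inequality
`‖x - y₂‖ ≤ ‖x - y₁‖ + ‖y₁ - y₂‖`, where `‖y₁ - y₂‖ = 1/2`. In the uniform norm it holds on a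
whole cone: exactly when `x₁ ≤ 1/4` and `|x₂ - 1/2| ≤ 1/4 - x₁`. Within the unit square this is a
triangle with base `1/2` and height `1/4`, of area `1/16`. The level set for `-1/2` is its mirror
image. Both areas are computed by slicing vertically (`volume_symm_region`).
-/

/-- Area of the region of half-height `f` around the line `x₂ = c`, over the interval `[a, b]`. -/
lemma volume_symm_region (a b c : ℝ) (hab : a ≤ b) (f : ℝ → ℝ) (hf : Continuous f)
    (hf0 : ∀ x ∈ Set.Icc a b, 0 ≤ f x) :
    volume {x : ℝ × ℝ | x.1 ∈ Set.Icc a b ∧ |x.2 - c| ≤ f x.1} =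
      ENNReal.ofReal (∫ x in a..b, 2 * f x) := by
  have hm : MeasurableSet {x : ℝ × ℝ | x.1 ∈ Set.Icc a b ∧ |x.2 - c| ≤ f x.1} := by
    apply IsClosed.measurableSet
    exact (isClosed_Icc.preimage continuous_fst).inter
      (isClosed_le (f := fun x : ℝ × ℝ => |x.2 - c|) (g := fun x : ℝ × ℝ => f x.1)
        (by fun_prop) (by fun_prop))
  rw [Measure.volume_eq_prod, Measure.prod_apply hm]
  have hs : ∀ x : ℝ, volume (Prod.mk x ⁻¹' {x : ℝ × ℝ | x.1 ∈ Set.Icc a b ∧ |x.2 - c| ≤ f x.1}) =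
      (Set.Icc a b).indicator (fun x => ENNReal.ofReal (2 * f x)) x := by
    intro x
    by_cases hx : x ∈ Set.Icc a b
    · have : Prod.mk x ⁻¹' {x : ℝ × ℝ | x.1 ∈ Set.Icc a b ∧ |x.2 - c| ≤ f x.1} =
          Set.Icc (c - f x) (c + f x) := by
        ext y
        simp only [Set.mem_preimage, Set.mem_ofPred_eq, hx, true_and, abs_le]
        constructor <;> rintro ⟨h1, h2⟩ <;> constructor <;> linarith
      rw [this, Real.volume_Icc, Set.indicator_of_mem hx]
      congr 1
      ring
    · have : Prod.mk x ⁻¹' {x : ℝ × ℝ | x.1 ∈ Set.Icc a b ∧ |x.2 - c| ≤ f x.1} = ∅ := by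
        ext y
        simp only [Set.mem_preimage, Set.mem_ofPred_eq, hx, false_and, Set.mem_empty_iff_false]
      rw [this, measure_empty, Set.indicator_of_notMem hx]
  simp_rw [hs]
  rw [lintegral_indicator measurableSet_Icc, intervalIntegral.integral_of_le hab,
    ← integral_Icc_eq_integral_Ioc, ofReal_integral_eq_lintegral_ofReal]
  · exact (hf.const_mul 2 : Continuous fun x => 2 * f x).continuousOn.integrableOn_Icc
  · filter_upwards [ae_restrict_mem measurableSet_Icc] with x hx
    have := hf0 x hx
    positivity

/-- **Uniform-norm example, Section 3.1.** On `ℝ²` with the `∞`-norm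
`‖x‖_∞ = max (|x₁|, |x₂|)`, with `y₁ = (1/4, 1/2)`, `y₂ = (3/4, 1/2)` and
`g x = ‖x − y₂‖_∞ − ‖x − y₁‖_∞`, the Lebesgue measure of
`{x ∈ [0,1]² : g x = 1/2}` is `1/16`, and likewise for `g x = −1/2`. -/
theorem infNorm_example_level_sets_measure
    (g : ℝ × ℝ → ℝ)
    (hg : g = fun x =>
      max |x.1 - 3/4| |x.2 - 1/2| - max |x.1 - 1/4| |x.2 - 1/2|) :
    volume {x : ℝ × ℝ | x ∈ Set.Icc ((0 : ℝ), (0 : ℝ)) (1, 1) ∧ g x = 1/2} = 1/16 ∧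
    volume {x : ℝ × ℝ | x ∈ Set.Icc ((0 : ℝ), (0 : ℝ)) (1, 1) ∧ g x = -(1/2)} = 1/16 := by
  subst hg
  have h16 : ENNReal.ofReal (1/16) = 1/16 := by
    rw [ENNReal.ofReal_div_of_pos (by norm_num)]
    norm_num
  constructor
  · have hset : {x : ℝ × ℝ | x ∈ Set.Icc ((0 : ℝ), (0 : ℝ)) (1, 1) ∧
        max |x.1 - 3/4| |x.2 - 1/2| - max |x.1 - 1/4| |x.2 - 1/2| = 1/2} =
        {x : ℝ × ℝ | x.1 ∈ Set.Icc (0 : ℝ) (1/4) ∧ |x.2 - 1/2| ≤ 1/4 - x.1} := by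
      ext ⟨x, y⟩
      simp only [Set.mem_ofPred_eq, Set.mem_Icc, Prod.mk_le_mk]
      grind
    rw [hset, volume_symm_region 0 (1/4) (1/2) (by norm_num) (fun x => 1/4 - x) (by fun_prop)
      (fun x hx => by linarith [hx.2]), ← h16]
    congr 1
    rw [intervalIntegral.integral_const_mul, intervalIntegral.integral_sub (by simp) (by simp)]
    norm_num
  · have hset : {x : ℝ × ℝ | x ∈ Set.Icc ((0 : ℝ), (0 : ℝ)) (1, 1) ∧
        max |x.1 - 3/4| |x.2 - 1/2| - max |x.1 - 1/4| |x.2 - 1/2| = -(1/2)} =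
        {x : ℝ × ℝ | x.1 ∈ Set.Icc (3/4 : ℝ) 1 ∧ |x.2 - 1/2| ≤ x.1 - 3/4} := by
      ext ⟨x, y⟩
      simp only [Set.mem_ofPred_eq, Set.mem_Icc, Prod.mk_le_mk]
      grind
    rw [hset, volume_symm_region (3/4) 1 (1/2) (by norm_num) (fun x => x - 3/4) (by fun_prop)
      (fun x hx => by linarith [hx.1]), ← h16]
    congr 1
    rw [intervalIntegral.integral_const_mul, intervalIntegral.integral_sub (by simp) (by simp)]
    norm_num
end

section
/- Equip ℝ² with the ∞-norm ‖x‖_∞ = max(|x₁|, |x₂|), let y₁ = (1/4, 1/2) and y₂ = (3/4, 1/2), and let g(x) = ‖x − y₂‖_∞ − ‖x − y₁‖_∞. Then for every s ∈ ℝ, the two-dimensional Lebesgue measure of {x ∈ [0,1]² : g(x) ≥ s} does not lie in the open interval (0, 1/16). -/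
/-!
By the triangle inequality `g ≤ 1/2`, so the super-level sets for `s > 1/2` are empty. On the
triangle with vertices `(0, 1/4)`, `(0, 3/4)`, `(1/4, 1/2)`, where the first coordinate dominates
both norms, `g` is constantly equal to its maximum `1/2`. Hence every super-level set for `s ≤ 1/2`
contains this triangle, whose area is `1/16` (`volume_maxTriangle`).
-/

open MeasureTheory

/-- The interior of the triangle with vertices `(0, 1/4)`, `(0, 3/4)`, `(1/4, 1/2)`, written as the
region strictly between the graphs of two affine functions over `(0, 1/4]`. -/
def maxTriangle : Set (ℝ × ℝ) :=
  regionBetween (fun x => 1/4 + x) (fun x => 3/4 - x) (Set.Ioc (0 : ℝ) (1/4))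

theorem volume_maxTriangle : volume maxTriangle = 1/16 := by
  have hi : ∀ f : ℝ → ℝ, Continuous f → IntegrableOn f (Set.Ioc (0 : ℝ) (1/4)) volume :=
    fun f hf => (hf.integrableOn_Icc).mono_set Set.Ioc_subset_Icc_self
  rw [maxTriangle, Measure.volume_eq_prod,
    volume_regionBetween_eq_integral (hi _ (by fun_prop)) (hi _ (by fun_prop)) measurableSet_Ioc
      (fun x hx => by linarith [hx.2]),
    ← intervalIntegral.integral_of_le (by norm_num)]
  have h : ∫ x in (0 : ℝ)..(1/4), ((fun x : ℝ => 3/4 - x) - fun x : ℝ => 1/4 + x) x = 1/16 := by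
    have h' : ((fun x : ℝ => 3/4 - x) - fun x => 1/4 + x) = fun x => 1/2 - 2 * x := by
      funext x
      simp only [Pi.sub_apply]
      ring
    rw [h', intervalIntegral.integral_sub (by simp)
      (Continuous.intervalIntegrable (by fun_prop) _ _), intervalIntegral.integral_const_mul,
      integral_id]
    norm_num
  rw [h, ENNReal.ofReal_div_of_pos (by norm_num)]
  norm_num

/-- **Uniform-norm example, failure of partitioning.** On `ℝ²` with the `∞`-norm, with
`y₁ = (1/4, 1/2)`, `y₂ = (3/4, 1/2)` and `g x = ‖x − y₂‖_∞ − ‖x − y₁‖_∞`, no super-level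
set `{x ∈ [0,1]² : g x ≥ s}` has Lebesgue measure strictly between `0` and `1/16`. -/
theorem infNorm_example_no_small_superlevel
    (g : ℝ × ℝ → ℝ)
    (hg : g = fun x =>
      max |x.1 - 3/4| |x.2 - 1/2| - max |x.1 - 1/4| |x.2 - 1/2|) :
    ∀ s : ℝ,
      volume {x : ℝ × ℝ | x ∈ Set.Icc ((0 : ℝ), (0 : ℝ)) (1, 1) ∧ g x ≥ s}
        ∉ Set.Ioo (0 : ENNReal) (1/16) := by
  rintro s ⟨hpos, hlt⟩
  rcases le_or_gt s (1/2) with hs | hs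
  · refine hlt.not_ge ?_
    rw [← volume_maxTriangle]
    refine measure_mono ?_
    rintro ⟨a, b⟩ ⟨⟨ha0, ha1⟩, hb0, hb1⟩
    simp only at ha0 ha1 hb0 hb1
    refine ⟨⟨⟨ha0.le, by linarith⟩, by linarith, by linarith⟩, ?_⟩
    have h1 : 3/4 - a ≤ max |a - 3/4| |b - 1/2| :=
      le_max_of_le_left (by linarith [neg_le_abs (a - 3/4)])
    have h2 : max |a - 1/4| |b - 1/2| ≤ 1/4 - a :=
      max_le (abs_le.2 ⟨by linarith, by linarith⟩) (abs_le.2 ⟨by linarith, by linarith⟩)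
    simp only [hg]
    linarith
  · refine hpos.ne' ?_
    convert measure_empty (μ := (volume : Measure (ℝ × ℝ)))
    refine Set.eq_empty_of_forall_notMem ?_
    rintro ⟨a, b⟩ ⟨-, h⟩
    simp only [hg] at h
    have h1 : max |a - 3/4| |b - 1/2| ≤ max |a - 1/4| |b - 1/2| + 1/2 := by
      have hl := le_max_left |a - 1/4| |b - 1/2|
      have hr := le_max_right |a - 1/4| |b - 1/2|
      refine max_le (abs_le.2 ⟨?_, ?_⟩) (by linarith)
      · linarith [neg_le_abs (a - 1/4)]
      · linarith [le_abs_self (a - 1/4)]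
    linarith
end

section
/- Equip ℝ² with the 1-norm ‖x‖₁ = |x₁| + |x₂|, let y₁ = (1/4, 1/4) and y₂ = (3/4, 3/4). Then the two-dimensional Lebesgue measure of {x ∈ [0,1]² : ‖x − y₂‖₁ = ‖x − y₁‖₁} equals 1/8. -/
/-!
On `[0,1]` the function `f t = |t - 3/4| - |t - 1/4|` equals `1/2` for `t ≤ 1/4`, `1 - 2 t` for
`1/4 ≤ t ≤ 3/4`, and `-1/2` for `t ≥ 3/4`. The tie set is `f x₁ + f x₂ = 0`, so it consists of the
two corner squares `[0,1/4] × [3/4,1]` and `[3/4,1] × [0,1/4]`, of area `1/16` each, together with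
a piece of the antidiagonal `x₁ + x₂ = 1`, which is a null set (`volume_antidiagonal`).
-/

open MeasureTheory

lemma volume_antidiagonal : volume {x : ℝ × ℝ | x.1 + x.2 = 1} = 0 := by
  have hm : MeasurableSet {x : ℝ × ℝ | x.1 + x.2 = 1} :=
    measurableSet_eq_fun (by fun_prop) (by fun_prop)
  rw [Measure.volume_eq_prod, Measure.measure_prod_null hm]
  refine Filter.Eventually.of_forall fun a => ?_
  have h : Prod.mk a ⁻¹' {x : ℝ × ℝ | x.1 + x.2 = 1} = {1 - a} := by
    ext b
    simp only [Set.mem_preimage, Set.mem_setOf_eq, Set.mem_singleton_iff]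
    constructor <;> intro h <;> linarith
  simp [h]

lemma tie_set_eq :
    {x : ℝ × ℝ | x ∈ Set.Icc ((0 : ℝ), (0 : ℝ)) (1, 1) ∧
      |x.1 - 3/4| + |x.2 - 3/4| = |x.1 - 1/4| + |x.2 - 1/4|} =
    (Set.Icc (0 : ℝ) (1/4) ×ˢ Set.Icc (3/4 : ℝ) 1 ∪
      Set.Icc (3/4 : ℝ) 1 ×ˢ Set.Icc (0 : ℝ) (1/4)) ∪
    {x : ℝ × ℝ | x.1 + x.2 = 1 ∧ x.1 ∈ Set.Icc (1/4 : ℝ) (3/4)} := by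
  ext ⟨a, b⟩
  simp only [Set.mem_setOf_eq, Set.mem_union, Set.mem_prod, Set.mem_Icc, Prod.mk_le_mk]
  constructor
  · rintro ⟨⟨⟨h1, h2⟩, h3, h4⟩, h⟩
    grind
  · intro h
    grind

/-- **Manhattan-norm example, Section 3.1, case `ν(y₁) = 1/2`.** On `ℝ²` with the
`1`-norm `‖x‖₁ = |x₁| + |x₂|`, with `y₁ = (1/4, 1/4)` and `y₂ = (3/4, 3/4)`, the tie set
`{x ∈ [0,1]² : ‖x − y₂‖₁ = ‖x − y₁‖₁}` has Lebesgue measure `1/8`. -/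
theorem oneNorm_example_tie_set_measure :
    volume {x : ℝ × ℝ | x ∈ Set.Icc ((0 : ℝ), (0 : ℝ)) (1, 1) ∧
      |x.1 - 3/4| + |x.2 - 3/4| = |x.1 - 1/4| + |x.2 - 1/4|} = 1/8 := by
  have h0 : volume {x : ℝ × ℝ | x.1 + x.2 = 1 ∧ x.1 ∈ Set.Icc (1/4 : ℝ) (3/4)} = 0 :=
    measure_mono_null (fun _ hx => hx.1) volume_antidiagonal
  have hd : Disjoint (Set.Icc (0 : ℝ) (1/4) ×ˢ Set.Icc (3/4 : ℝ) 1)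
      (Set.Icc (3/4 : ℝ) 1 ×ˢ Set.Icc (0 : ℝ) (1/4)) := by
    rw [Set.disjoint_left]
    rintro ⟨a, b⟩ h h'
    simp only [Set.mem_prod, Set.mem_Icc] at h h'
    linarith [h.1.2, h'.1.1]
  rw [tie_set_eq, measure_congr (union_ae_eq_left_of_ae_eq_empty (ae_eq_empty.2 h0)),
    measure_union hd (measurableSet_Icc.prod measurableSet_Icc), Measure.volume_eq_prod,
    Measure.prod_prod, Measure.prod_prod, Real.volume_Icc, Real.volume_Icc,
    ← ENNReal.ofReal_mul (by norm_num), ← ENNReal.ofReal_mul (by norm_num),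
    ← ENNReal.ofReal_add (by norm_num) (by norm_num)]
  rw [show ((1/4 - 0) * (1 - 3/4) + (1 - 3/4) * (1/4 - 0) : ℝ) = 1/8 by norm_num,
    ENNReal.ofReal_div_of_pos (by norm_num)]
  simp
end

section
/- Equip ℝ² with the 1-norm ‖x‖₁ = |x₁| + |x₂|, let y₁ = (1/4, 1/4) and y₂ = (3/4, 3/4), and let g(x) = ‖x − y₂‖₁ − ‖x − y₁‖₁. Then for every s ∈ ℝ, the two-dimensional Lebesgue measure of {x ∈ [0,1]² : g(x) ≥ s} does not lie in the open interval (7/16, 9/16). -/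
/-!
The reflection `x ↦ (1, 1) - x` preserves the unit square and changes the sign of `g`, so
`P = {g > 0}` and `N = {g < 0}` have the same measure inside the square. On the two corner squares
`[0, 1/4] × [3/4, 1]` and `[3/4, 1] × [0, 1/4]`, each of measure `1/16`, `g` vanishes. Hence
`2 |P| + 1/8 ≤ 1`, that is, `|P| = |N| ≤ 7/16`. A super-level set with `s > 0` lies in `P`, while
one with `s ≤ 0` contains the complement of `N`, whose measure is at least `9/16`.
-/

open MeasureTheory

namespace OneNormExample

/-- The difference `‖x - y₂‖₁ - ‖x - y₁‖₁` of the Manhattan distances to the two targets. -/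
noncomputable def G (x : ℝ × ℝ) : ℝ :=
  (|x.1 - 3/4| + |x.2 - 3/4|) - (|x.1 - 1/4| + |x.2 - 1/4|)

/-- The unit square. -/
def S : Set (ℝ × ℝ) := Set.Icc (0, 0) (1, 1)

/-- The part of the unit square strictly closer to `y₁`. -/
def P : Set (ℝ × ℝ) := S ∩ {x | 0 < G x}

/-- The part of the unit square strictly closer to `y₂`. -/
def N : Set (ℝ × ℝ) := S ∩ {x | G x < 0}

lemma continuous_G : Continuous G := by unfold G; fun_prop

lemma measurableSet_S : MeasurableSet S := isClosed_Icc.measurableSet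

lemma measurableSet_P : MeasurableSet P :=
  measurableSet_S.inter (isOpen_lt continuous_const continuous_G).measurableSet

lemma measurableSet_N : MeasurableSet N :=
  measurableSet_S.inter (isOpen_lt continuous_G continuous_const).measurableSet

lemma G_reflect (x : ℝ × ℝ) : G ((1, 1) - x) = -G x := by
  have h1 (t : ℝ) : |1 - t - 3/4| = |t - 1/4| := by rw [abs_sub_comm t]; congr 1; ring
  have h2 (t : ℝ) : |1 - t - 1/4| = |t - 3/4| := by rw [abs_sub_comm t]; congr 1; ring
  simp only [G, Prod.fst_sub, Prod.snd_sub, h1, h2]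
  ring

lemma mem_S (x : ℝ × ℝ) : x ∈ S ↔ (0 ≤ x.1 ∧ 0 ≤ x.2) ∧ x.1 ≤ 1 ∧ x.2 ≤ 1 := Iff.rfl

/-- The reflection `x ↦ (1, 1) - x` carries `P` onto `N`. -/
lemma volume_P_eq_volume_N : volume P = volume N := by
  have h := (Measure.measurePreserving_sub_left (volume : Measure (ℝ × ℝ)) (1, 1)).measure_preimage
    measurableSet_N.nullMeasurableSet
  rw [← h]
  congr 1
  ext x
  simp only [P, N, Set.mem_inter_iff, Set.mem_preimage, Set.mem_ofPred_eq, G_reflect, mem_S,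
    Prod.fst_sub, Prod.snd_sub]
  grind

lemma real_P_eq_real_N : volume.real P = volume.real N := by
  simp [measureReal_def, volume_P_eq_volume_N]

lemma volume_Icc_prod (a b c d : ℝ) :
    volume (Set.Icc (a, c) (b, d)) = ENNReal.ofReal (b - a) * ENNReal.ofReal (d - c) := by
  rw [← Set.Icc_prod_Icc, Measure.volume_eq_prod, Measure.prod_prod, Real.volume_Icc,
    Real.volume_Icc]

lemma real_S : volume.real S = 1 := by
  simp [S, measureReal_def, volume_Icc_prod]

lemma volume_S_ne_top : volume S ≠ ⊤ := by
  simp [S, volume_Icc_prod]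

/-- The upper left corner square, on which `G` vanishes. -/
def Q₁ : Set (ℝ × ℝ) := Set.Icc (0, 3/4) (1/4, 1)

/-- The lower right corner square, on which `G` vanishes. -/
def Q₂ : Set (ℝ × ℝ) := Set.Icc (3/4, 0) (1, 1/4)

lemma mem_Q₁ (x : ℝ × ℝ) : x ∈ Q₁ ↔ (0 ≤ x.1 ∧ 3/4 ≤ x.2) ∧ x.1 ≤ 1/4 ∧ x.2 ≤ 1 := Iff.rfl

lemma mem_Q₂ (x : ℝ × ℝ) : x ∈ Q₂ ↔ (3/4 ≤ x.1 ∧ 0 ≤ x.2) ∧ x.1 ≤ 1 ∧ x.2 ≤ 1/4 := Iff.rfl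

lemma real_Q₁ : volume.real Q₁ = 1/16 := by
  rw [measureReal_def, Q₁, volume_Icc_prod, ENNReal.toReal_mul, ENNReal.toReal_ofReal (by norm_num),
    ENNReal.toReal_ofReal (by norm_num)]
  norm_num

lemma real_Q₂ : volume.real Q₂ = 1/16 := by
  rw [measureReal_def, Q₂, volume_Icc_prod, ENNReal.toReal_mul, ENNReal.toReal_ofReal (by norm_num),
    ENNReal.toReal_ofReal (by norm_num)]
  norm_num

lemma G_eq_zero {x : ℝ × ℝ} (hx : x ∈ Q₁ ∪ Q₂) : G x = 0 := by
  rw [Set.mem_union, mem_Q₁, mem_Q₂] at hx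
  unfold G
  grind

lemma Q_subset : Q₁ ∪ Q₂ ⊆ S := by
  intro x hx
  rw [Set.mem_union, mem_Q₁, mem_Q₂] at hx
  rw [mem_S]
  grind

lemma real_Q : volume.real (Q₁ ∪ Q₂) = 1/8 := by
  have hd : Disjoint Q₁ Q₂ := by
    rw [Set.disjoint_left]
    intro x h1 h2
    rw [mem_Q₁] at h1
    rw [mem_Q₂] at h2
    linarith [h1.2.1, h2.1.1]
  rw [measureReal_union hd isClosed_Icc.measurableSet
    (measure_ne_top_of_subset (Set.subset_union_left.trans Q_subset) volume_S_ne_top)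
    (measure_ne_top_of_subset (Set.subset_union_right.trans Q_subset) volume_S_ne_top),
    real_Q₁, real_Q₂]
  norm_num

lemma P_subset : P ⊆ S := Set.inter_subset_left

lemma N_subset : N ⊆ S := Set.inter_subset_left

/-- `P`, `N` and the two corner squares are disjoint in the unit square, and `P` and `N` have the
same area, which leaves at most half of `1 - 1/8` for `N`. -/
lemma real_N_le : volume.real N ≤ 7/16 := by
  have hfin {A : Set (ℝ × ℝ)} (h : A ⊆ S) : volume A ≠ ⊤ :=
    measure_ne_top_of_subset h volume_S_ne_top
  have hd : Disjoint P N := by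
    rw [Set.disjoint_left]
    exact fun x h1 h2 => lt_asymm (Set.mem_ofPred.1 h1.2) (Set.mem_ofPred.1 h2.2)
  have hdQ : Disjoint (Q₁ ∪ Q₂) (P ∪ N) := by
    rw [Set.disjoint_left]
    rintro x hx (h | h)
    · exact h.2.ne' (G_eq_zero hx)
    · exact h.2.ne (G_eq_zero hx)
  have hsub : P ∪ N ⊆ S := Set.union_subset P_subset N_subset
  have h1 := measureReal_union hd measurableSet_N (hfin P_subset) (hfin N_subset)
  have h2 := measureReal_union hdQ (measurableSet_P.union measurableSet_N) (hfin Q_subset)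
    (hfin hsub)
  have h3 := measureReal_mono (μ := volume) (Set.union_subset Q_subset hsub) volume_S_ne_top
  rw [h2, h1, real_Q, real_S, real_P_eq_real_N] at h3
  linarith

end OneNormExample

open OneNormExample in
/-- **Manhattan-norm example, failure of partitioning near `1/2`.** On `ℝ²` with the
`1`-norm, with `y₁ = (1/4, 1/4)`, `y₂ = (3/4, 3/4)` and
`g x = ‖x − y₂‖₁ − ‖x − y₁‖₁`, no super-level set `{x ∈ [0,1]² : g x ≥ s}` has Lebesgue
measure strictly between `7/16` and `9/16`. -/
theorem oneNorm_example_no_middle_superlevel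
    (g : ℝ × ℝ → ℝ)
    (hg : g = fun x =>
      (|x.1 - 3/4| + |x.2 - 3/4|) - (|x.1 - 1/4| + |x.2 - 1/4|)) :
    ∀ s : ℝ,
      volume {x : ℝ × ℝ | x ∈ Set.Icc ((0 : ℝ), (0 : ℝ)) (1, 1) ∧ g x ≥ s}
        ∉ Set.Ioo (7/16 : ENNReal) (9/16) := by
  intro s
  obtain rfl : g = G := hg
  set A : Set (ℝ × ℝ) := {x | x ∈ Set.Icc ((0 : ℝ), (0 : ℝ)) (1, 1) ∧ G x ≥ s} with hA
  have hAS : A ⊆ S := fun x hx => hx.1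
  have hfin : volume A ≠ ⊤ := measure_ne_top_of_subset hAS volume_S_ne_top
  rintro ⟨hlo, hhi⟩
  have hlo' : 7/16 < volume.real A := by
    have := (ENNReal.toReal_lt_toReal (ne_top_of_lt hlo) hfin).2 hlo
    simpa [measureReal_def] using this
  have hhi' : volume.real A < 9/16 := by
    have := (ENNReal.toReal_lt_toReal hfin
      (ENNReal.div_ne_top (by simp) (by simp))).2 hhi
    simpa [measureReal_def] using this
  have hN := real_N_le
  rcases lt_or_ge 0 s with hs | hs
  · have hAP : A ⊆ P := fun x hx => ⟨hx.1, hs.trans_le hx.2⟩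
    have h := measureReal_mono (μ := volume) hAP
      (measure_ne_top_of_subset P_subset volume_S_ne_top)
    rw [real_P_eq_real_N] at h
    linarith
  · have hSAN : S ⊆ A ∪ N := by
      intro x hx
      rcases lt_or_ge (G x) 0 with h | h
      · exact Or.inr ⟨hx, h⟩
      · exact Or.inl ⟨hx, hs.trans h⟩
    have h1 := measureReal_mono (μ := volume) hSAN
      (measure_ne_top_of_subset (Set.union_subset hAS N_subset) volume_S_ne_top)
    have h2 := measureReal_union_le (μ := volume) A N
    rw [real_S] at h1
    linarith
end
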